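/- arXiv:0910.1737 — 3 statements merged into one kernel-verified Lean document; each statement's English description precedes it below -/
import Mathlib

section
/- Let {A_m}, {B_m}, {C_m} be sequences of N×N real matrices and let {V_m}_{m∈ℕ} and {G_m}_{m∈ℕ} be sequences of N×N matrix polynomials satisfying, for all m ≥ 0, the recurrences x·V_m(x) = A_m·V_{m+1}(x) + B_m·V_m(x) + C_m·V_{m−1}(x) and z·G_m(z) = G_{m−1}(z)·A_{m−1} + G_m(z)·B_m + G_{m+1}(z)·C_{m+1}, with V_{−1} := 0 and G_{−1} := 0. Then for every m ∈ ℕ and all x, z the Christoffel–Darboux type formula holds: (x − z)·Σ_{k=0}^m G_k(z)·V_k(x) = G_m(z)·A_m·V_{m+1}(x) − G_{m+1}(z)·C_{m+1}·V_m(x). -/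
open Polynomial Matrix Finset

noncomputable section

abbrev Mat (N : ℕ) := Matrix (Fin N) (Fin N) ℝ

/-- `N×N` real matrix polynomials. -/
abbrev MatPoly (N : ℕ) := Polynomial (Mat N)

def UpperTri {N : ℕ} {R : Type*} [Zero R] (A : Matrix (Fin N) (Fin N) R) : Prop :=
  ∀ i j : Fin N, (j : ℕ) < (i : ℕ) → A i j = 0

def LowerTri {N : ℕ} {R : Type*} [Zero R] (A : Matrix (Fin N) (Fin N) R) : Prop :=
  ∀ i j : Fin N, (i : ℕ) < (j : ℕ) → A i j = 0

/-- Evaluation of a matrix polynomial at a real point. -/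
def MPeval {N : ℕ} (P : MatPoly N) (x : ℝ) : Mat N :=
  P.sum fun k A => x ^ k • A

/-!
Let `J` be the tridiagonal matrix with diagonal `B₀, B₁, …`, superdiagonal `A₀, A₁, …` and
subdiagonal `C₁, C₂, …`. The recurrences say that the column `V(x)` and the row `G(z)` are right and
left eigenvectors of `J`, with eigenvalues `x` and `z`. The two ways of bracketing `G(z) J V(x)`,
truncated after row `m`, differ only through the two entries of `J` that straddle the cut, so
`∑ k ≤ m, (Gₖ (J V)ₖ - (G J)ₖ Vₖ)` consists of two boundary terms, while it is also
`(x - z) ∑ k ≤ m, Gₖ Vₖ`.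
-/

section Tridiagonal

section Mul

variable {R : Type*} [NonUnitalNonAssocSemiring R]

/-- The product `J v` of the tridiagonal matrix `J`, with superdiagonal `a 0, a 1, …`,
diagonal `b 0, b 1, …` and subdiagonal `c 1, c 2, …`, with the column `v`. The entry `c 0` is
ignored, which encodes the convention `v (-1) = 0`. -/
def tridiagMulVec (a b c v : ℕ → R) (k : ℕ) : R :=
  a k * v (k + 1) + b k * v k + if k = 0 then 0 else c k * v (k - 1)

/-- The product `g J` of the row `g` with the tridiagonal matrix `J` of `tridiagMulVec`, under the
convention `g (-1) = 0`. -/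
def tridiagVecMul (g a b c : ℕ → R) (k : ℕ) : R :=
  (if k = 0 then 0 else g (k - 1) * a (k - 1)) + g k * b k + g (k + 1) * c (k + 1)

end Mul

section Map

variable {R R' F : Type*} [NonUnitalNonAssocSemiring R] [NonUnitalNonAssocSemiring R']
  [FunLike F R R'] [NonUnitalRingHomClass F R R']

theorem map_tridiagMulVec (f : F) (a b c v : ℕ → R) (k : ℕ) :
    f (tridiagMulVec a b c v k) = tridiagMulVec (f ∘ a) (f ∘ b) (f ∘ c) (f ∘ v) k := by
  simp [tridiagMulVec, apply_ite f]

theorem map_tridiagVecMul (f : F) (g a b c : ℕ → R) (k : ℕ) :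
    f (tridiagVecMul g a b c k) = tridiagVecMul (f ∘ g) (f ∘ a) (f ∘ b) (f ∘ c) k := by
  simp [tridiagVecMul, apply_ite f]

end Map

section ChristoffelDarboux

variable {R : Type*} [NonUnitalRing R]

/-- The discrete Wronskian of a row `g` and a column `v` at the cut between `k` and `k + 1`: the
boundary term of summation by parts for the tridiagonal matrix of `tridiagMulVec`. -/
def casoratian (g a c v : ℕ → R) (k : ℕ) : R :=
  g k * a k * v (k + 1) - g (k + 1) * c (k + 1) * v k

theorem mul_tridiagMulVec_sub_tridiagVecMul_mul_zero (g a b c v : ℕ → R) :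
    g 0 * tridiagMulVec a b c v 0 - tridiagVecMul g a b c 0 * v 0 = casoratian g a c v 0 := by
  simp only [tridiagMulVec, tridiagVecMul, casoratian, if_true]
  noncomm_ring

theorem mul_tridiagMulVec_sub_tridiagVecMul_mul_succ (g a b c v : ℕ → R) (k : ℕ) :
    g (k + 1) * tridiagMulVec a b c v (k + 1) - tridiagVecMul g a b c (k + 1) * v (k + 1) =
      casoratian g a c v (k + 1) - casoratian g a c v k := by
  simp only [tridiagMulVec, tridiagVecMul, casoratian, k.succ_ne_zero, if_false,
    Nat.add_sub_cancel]
  noncomm_ring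

theorem sum_mul_tridiagMulVec_sub_tridiagVecMul_mul (g a b c v : ℕ → R) (m : ℕ) :
    ∑ k ∈ range (m + 1), (g k * tridiagMulVec a b c v k - tridiagVecMul g a b c k * v k) =
      casoratian g a c v m := by
  induction m with
  | zero => rw [sum_range_one, mul_tridiagMulVec_sub_tridiagVecMul_mul_zero]
  | succ m ih =>
    rw [sum_range_succ, ih, mul_tridiagMulVec_sub_tridiagVecMul_mul_succ, add_sub_cancel]

variable {S : Type*} [Ring S] [Module S R] [IsScalarTower S R R] [SMulCommClass S R R]

theorem sub_smul_sum_mul_eq_casoratian {a b c g v : ℕ → R} {x z : S}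
    (hv : ∀ k, x • v k = tridiagMulVec a b c v k)
    (hg : ∀ k, z • g k = tridiagVecMul g a b c k) (m : ℕ) :
    (x - z) • ∑ k ∈ range (m + 1), g k * v k = casoratian g a c v m := by
  calc (x - z) • ∑ k ∈ range (m + 1), g k * v k
      = ∑ k ∈ range (m + 1), (g k * (x • v k) - (z • g k) * v k) := by
        simp only [smul_sum, sub_smul, mul_smul_comm, smul_mul_assoc]
    _ = ∑ k ∈ range (m + 1), (g k * tridiagMulVec a b c v k - tridiagVecMul g a b c k * v k) := by
        simp only [hv, hg]
    _ = casoratian g a c v m := sum_mul_tridiagMulVec_sub_tridiagVecMul_mul g a b c v m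

end ChristoffelDarboux

end Tridiagonal

section ScalarEval

variable {S R : Type*} [CommSemiring S] [Semiring R] [Algebra S R]

variable (R) in
/-- Evaluation at a scalar `s` of polynomials with coefficients in a possibly noncommutative
`S`-algebra. It is a ring homomorphism because `s` is central. -/
def scalarEval (s : S) : R[X] →+* R :=
  eval₂RingHom' (RingHom.id R) (algebraMap S R s) fun r => (Algebra.commutes s r).symm

theorem scalarEval_C (s : S) (r : R) : scalarEval R s (C r) = r :=
  eval₂_C _ _

theorem scalarEval_X_mul (s : S) (p : R[X]) : scalarEval R s (X * p) = s • scalarEval R s p := by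
  have scalarEval_X : scalarEval R s X = algebraMap S R s := eval₂_X _ _
  rw [map_mul, scalarEval_X, Algebra.smul_def]

theorem scalarEval_eq_sum (s : S) (p : R[X]) :
    scalarEval R s p = p.sum fun k r => s ^ k • r := by
  have mul_pow_eq_smul (k : ℕ) (r : R) : r * algebraMap S R s ^ k = s ^ k • r := by
    rw [← map_pow, ← Algebra.commutes, Algebra.smul_def]
  simp only [← mul_pow_eq_smul]
  exact eval₂_eq_sum

end ScalarEval

theorem MPeval_eq_scalarEval {N : ℕ} (P : MatPoly N) (x : ℝ) :
    MPeval P x = scalarEval (Mat N) x P :=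
  (scalarEval_eq_sum x P).symm

theorem statement12_general {S R : Type*} [CommRing S] [Ring R] [Algebra S R]
    (a b c : ℕ → R) (V G : ℕ → R[X])
    (hV : ∀ k, X * V k = tridiagMulVec (C ∘ a) (C ∘ b) (C ∘ c) V k)
    (hG : ∀ k, X * G k = tridiagVecMul G (C ∘ a) (C ∘ b) (C ∘ c) k) (m : ℕ) (x z : S) :
    (x - z) • ∑ k ∈ range (m + 1), scalarEval R z (G k) * scalarEval R x (V k) =
      scalarEval R z (G m) * a m * scalarEval R x (V (m + 1)) -
        scalarEval R z (G (m + 1)) * c (m + 1) * scalarEval R x (V m) := by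
  have scalarEval_comp_C (s : S) (r : ℕ → R) : scalarEval R s ∘ C ∘ r = r :=
    funext fun k => scalarEval_C s (r k)
  have hv (k : ℕ) : x • scalarEval R x (V k) = tridiagMulVec a b c (scalarEval R x ∘ V) k := by
    rw [← scalarEval_X_mul, hV, map_tridiagMulVec]
    simp only [scalarEval_comp_C]
  have hg (k : ℕ) : z • scalarEval R z (G k) = tridiagVecMul (scalarEval R z ∘ G) a b c k := by
    rw [← scalarEval_X_mul, hG, map_tridiagVecMul]
    simp only [scalarEval_comp_C]
  exact sub_smul_sum_mul_eq_casoratian hv hg m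

theorem statement12
    (N : ℕ) (hN : 0 < N)
    (A B C : ℕ → Mat N) (V G : ℕ → MatPoly N)
    (hV : ∀ m : ℕ, X * V m = Polynomial.C (A m) * V (m + 1) + Polynomial.C (B m) * V m
      + (if m = 0 then 0 else Polynomial.C (C m) * V (m - 1)))
    (hG : ∀ m : ℕ, X * G m =
      (if m = 0 then 0 else G (m - 1) * Polynomial.C (A (m - 1)))
      + G m * Polynomial.C (B m) + G (m + 1) * Polynomial.C (C (m + 1))) :
    ∀ (m : ℕ) (x z : ℝ),
      (x - z) • ∑ k ∈ Finset.range (m + 1), MPeval (G k) z * MPeval (V k) x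
        = MPeval (G m) z * A m * MPeval (V (m + 1)) x
          - MPeval (G (m + 1)) z * C (m + 1) * MPeval (V m) x := by
  simpa only [MPeval_eq_scalarEval] using statement12_general A B C V G hV hG
end
end

section
/- Let V(t) be an N×N matrix polynomial over ℂ and let a ∈ ℂ be a zero of the scalar polynomial det V(t) of multiplicity p ≥ 1. Set L(a,V) = {v ∈ ℂ^N (row vector) : v·V(a) = 0} and R(a,V) = {v ∈ ℂ^N (row vector) : V(a)·v* = 0}, where v* is the conjugate transpose of v. If dim L(a,V) = dim R(a,V) = p, then: (i) the l-th derivative of the adjugate satisfies (Adj V)^{(l)}(a) = 0_{N×N} for all 0 ≤ l ≤ p−2; (ii) M := (Adj V)^{(p−1)}(a) ≠ 0_{N×N} and rank M = p; (iii) the linear map v ↦ v·M maps ℂ^N onto L(a,V), and its restriction to R(a,V) is an isomorphism onto L(a,V). -/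
open Polynomial Matrix

noncomputable section

/-- Iterated derivative of a polynomial. -/
def iterDeriv {R : Type*} [CommSemiring R] (l : ℕ) (q : Polynomial R) : Polynomial R :=
  (fun r => Polynomial.derivative r)^[l] q

/-- The left null space `L(a,V) = {v : v · V(a) = 0}` (row vectors). -/
def Lsub {N : ℕ} (M : Matrix (Fin N) (Fin N) ℂ) : Submodule ℂ (Fin N → ℂ) :=
  LinearMap.ker M.vecMulLinear

/-- The space `R(a,V) = {v : V(a) · v* = 0}`, where `v*` is the conjugate transpose of the
row vector `v`. -/
def Rsub {N : ℕ} (M : Matrix (Fin N) (Fin N) ℂ) : Submodule ℂ (Fin N → ℂ) where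
  carrier := {v | M.mulVec (fun i => (starRingEnd ℂ) (v i)) = 0}
  zero_mem' := by
    have : (fun i : Fin N => (starRingEnd ℂ) ((0 : Fin N → ℂ) i)) = (0 : Fin N → ℂ) := by
      funext i; simp
    simp only [Set.mem_setOf_eq, this, Matrix.mulVec_zero]
  add_mem' := by
    intro a b ha hb
    simp only [Set.mem_setOf_eq] at *
    have : (fun i => (starRingEnd ℂ) ((a + b) i))
        = (fun i => (starRingEnd ℂ) (a i)) + (fun i => (starRingEnd ℂ) (b i)) := by
      funext i; simp
    rw [this, Matrix.mulVec_add, ha, hb, add_zero]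
  smul_mem' := by
    intro c v hv
    simp only [Set.mem_setOf_eq] at *
    have : (fun i => (starRingEnd ℂ) ((c • v) i))
        = (starRingEnd ℂ) c • (fun i => (starRingEnd ℂ) (v i)) := by
      funext i; simp [mul_comm]
    rw [this, Matrix.mulVec_smul, hv, smul_zero]

/-- The matrix `(Adj V)^{(l)}(a)`: the `l`-th derivative of the adjugate, evaluated at `a`. -/
def adjDer {N : ℕ} (V : Matrix (Fin N) (Fin N) (Polynomial ℂ)) (l : ℕ) (a : ℂ) :
    Matrix (Fin N) (Fin N) ℂ :=
  Matrix.of fun i j => Polynomial.eval a (iterDeriv l (V.adjugate i j))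

/-!
Row and column operations at `a` make `dim L(a, V)` columns of `V` divisible by `X - a`, so
`(X - a) ^ dim L(a, V)` divides `det V`. Each entry of `Adj V` is the determinant of a matrix which
differs from `V` in a single row, so `(X - a) ^ (p - 1)` divides `Adj V = (X - a) ^ (p - 1) • U`;
then `V * U = U * V` is `X - a` times a scalar that does not vanish at `a`. Comparing determinants,
`a` is a zero of `det U` of multiplicity `N - p`, and the first remark applied to `U` yields
`rank U(a) = p`, the largest value that `V(a) * U(a) = 0` permits. So the image of `v ↦ v * U(a)` is
the left null space of `V(a)` and its kernel is the row space of `V(a)`, whose orthogonal complement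
is `R(a, V)`.
-/

theorem bijOn_range_of_isCompl_ker {R E F : Type*} [Ring R] [AddCommGroup E] [Module R E]
    [AddCommGroup F] [Module R F] {f : E →ₗ[R] F} {S : Submodule R E}
    (h : IsCompl S (LinearMap.ker f)) : Set.BijOn f S (LinearMap.range f) := by
  have himage : S.map f = LinearMap.range f :=
    Submodule.map_eq_range_iff.2 h.codisjoint
  refine ⟨fun v _ ↦ ⟨v, rfl⟩, LinearMap.disjoint_ker_iff_injOn.1 h.disjoint, ?_⟩
  rw [← himage]
  exact subset_rfl

theorem coe_ker_vecMulLinear_conjTranspose {R m n : Type*} [Semiring R] [StarRing R]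
    [Fintype n] (A : Matrix m n R) :
    (LinearMap.ker Aᴴ.vecMulLinear : Set (n → R)) = {v | A *ᵥ star v = 0} := by
  ext v
  have hstar : star (A *ᵥ star v) = v ᵥ* Aᴴ := by
    rw [star_mulVec, star_star]
  rw [Set.mem_ofPred_eq, ← star_eq_zero, hstar]
  rfl

section RowSpaces

variable {K l m n : Type*} [Field K] [Fintype l] [Fintype m] [Fintype n]

theorem rank_add_finrank_ker_vecMulLinear (A : Matrix m n K) :
    A.rank + Module.finrank K (LinearMap.ker A.vecMulLinear) = Fintype.card m := by
  rw [← rank_transpose, rank, mulVecLin_transpose, LinearMap.finrank_range_add_finrank_ker,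
    Module.finrank_fintype_fun_eq_card]

theorem range_vecMulLinear_eq_ker_of_mul_eq_zero {M : Matrix l m K} {A : Matrix m n K}
    (hMA : M * A = 0) (hrank : M.rank + A.rank = Fintype.card m) :
    LinearMap.range M.vecMulLinear = LinearMap.ker A.vecMulLinear := by
  apply Submodule.eq_of_le_of_finrank_eq
  · rintro _ ⟨v, rfl⟩
    simp [hMA]
  · have hA := rank_add_finrank_ker_vecMulLinear A
    rw [← mulVecLin_transpose, ← rank, rank_transpose]
    omega

theorem isCompl_ker_vecMulLinear_conjTranspose_range [PartialOrder K] [StarRing K]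
    [StarOrderedRing K] (A : Matrix m n K) :
    IsCompl (LinearMap.ker Aᴴ.vecMulLinear) (LinearMap.range A.vecMulLinear) := by
  have hdim : Module.finrank K (LinearMap.ker Aᴴ.vecMulLinear) +
      Module.finrank K (LinearMap.range A.vecMulLinear) = Module.finrank K (n → K) := by
    rw [← mulVecLin_transpose A, ← rank, rank_transpose, ← rank_conjTranspose, add_comm,
      rank_add_finrank_ker_vecMulLinear, Module.finrank_fintype_fun_eq_card]
  rw [Submodule.isCompl_iff_disjoint _ _ hdim.ge, Submodule.disjoint_def]
  rintro _ hv ⟨w, rfl⟩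
  have horth : (w ᵥ* A) ᵥ* Aᴴ = 0 := hv
  have hself : (w ᵥ* A) ⬝ᵥ star (w ᵥ* A) = 0 := by
    rw [star_vecMul, dotProduct_mulVec, horth, zero_dotProduct]
  exact dotProduct_self_star_eq_zero.1 hself

theorem bijOn_vecMulLinear_of_mul_eq_zero [PartialOrder K] [StarRing K] [StarOrderedRing K]
    {k : Type*} [Finite k] {A : Matrix k m K} {M : Matrix m n K} (hAM : A * M = 0)
    (hrank : A.rank + M.rank = Fintype.card m) :
    Set.BijOn M.vecMulLinear {v | A *ᵥ star v = 0} (LinearMap.range M.vecMulLinear) := by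
  cases nonempty_fintype k
  rw [← coe_ker_vecMulLinear_conjTranspose]
  apply bijOn_range_of_isCompl_ker
  rw [← range_vecMulLinear_eq_ker_of_mul_eq_zero hAM hrank]
  exact isCompl_ker_vecMulLinear_conjTranspose_range A

end RowSpaces

section CommRing

variable {R n : Type*} [CommRing R] [Fintype n] [DecidableEq n]

theorem prod_dvd_det_of_forall_dvd {M : Matrix n n R} {x : n → R} (h : ∀ i j, x j ∣ M i j) :
    ∏ j, x j ∣ M.det := by
  rw [det_apply]
  refine Finset.dvd_sum fun σ _ ↦ dvd_smul_of_dvd _ ?_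
  exact Finset.prod_dvd_prod_of_dvd _ _ fun j _ ↦ h (σ j) j

theorem mul_eq_smul_one_of_adjugate_eq_smul {V U : Matrix n n R} {c d : R}
    (hc : IsSMulRegular R c) (hadj : V.adjugate = c • U) (hdet : V.det = c * d) :
    V * U = d • 1 ∧ U * V = d • 1 := by
  have hVU := V.mul_adjugate
  have hUV := V.adjugate_mul
  rw [hadj, Matrix.mul_smul, hdet, mul_smul] at hVU
  rw [hadj, Matrix.smul_mul, hdet, mul_smul] at hUV
  exact ⟨hc.matrix hVU, hc.matrix hUV⟩

end CommRing

section IteratedDerivative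

variable {R m n : Type*} [CommRing R]

/-- The value `W⁽ˡ⁾(a)` at `a` of the entrywise `l`-th derivative of a matrix polynomial `W`; over
`ℂ`, `adjDer V l a` is `iterDerivAt V.adjugate l a` by definition. -/
def iterDerivAt (W : Matrix m n R[X]) (l : ℕ) (a : R) : Matrix m n R :=
  W.map fun q ↦ eval a (derivative^[l] q)

theorem iterDerivAt_X_sub_C_pow_smul_of_lt (U : Matrix m n R[X]) (a : R) {k l : ℕ}
    (hl : l < k) : iterDerivAt ((X - C a) ^ k • U) l a = 0 := by
  ext i j
  exact aeval_iterate_derivative_of_lt _ k a (Polynomial.map_id) hl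

theorem iterDerivAt_X_sub_C_pow_smul_self (U : Matrix m n R[X]) (a : R) (k : ℕ) :
    iterDerivAt ((X - C a) ^ k • U) k a = (k.factorial : R) • U.map (eval a) := by
  ext i j
  have h := aeval_iterate_derivative_self _ k a (Polynomial.map_id (p := (X - C a) ^ k * U i j))
  rw [nsmul_eq_mul] at h
  exact h

end IteratedDerivative

theorem map_eval_mul {R l m n : Type*} [CommSemiring R] [Fintype m] (V : Matrix l m R[X])
    (W : Matrix m n R[X]) (a : R) :
    (V * W).map (eval a) = V.map (eval a) * W.map (eval a) :=
  Matrix.map_mul (f := evalRingHom a)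

theorem map_eval_mul_map_eval_eq_zero {R n : Type*} [CommRing R] [Fintype n] [DecidableEq n]
    {V W : Matrix n n R[X]} {a : R} {q : R[X]} (h : V * W = ((X - C a) * q) • 1) :
    V.map (eval a) * W.map (eval a) = 0 := by
  rw [← map_eval_mul, h]
  ext i j
  simp

theorem rank_updateRow_le {K m n : Type*} [Field K] [Finite m] [DecidableEq m] [Fintype n]
    (A : Matrix m n K) (i : m) (b : n → K) : (A.updateRow i b).rank ≤ A.rank + 1 := by
  have hrows : Set.range (A.updateRow i b).row ⊆ {b} ∪ Set.range A.row := by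
    rintro _ ⟨k, rfl⟩
    obtain rfl | hk := eq_or_ne k i
    · exact .inl updateRow_self
    · exact .inr ⟨k, (updateRow_ne hk).symm⟩
  rw [rank_eq_finrank_span_row, rank_eq_finrank_span_row]
  calc
    _ ≤ Module.finrank K (Submodule.span K {b} ⊔ Submodule.span K (Set.range A.row) :) := by
      rw [← Submodule.span_union]
      exact Submodule.finrank_mono (Submodule.span_mono hrows)
    _ ≤ Module.finrank K (Submodule.span K {b}) +
        Module.finrank K (Submodule.span K (Set.range A.row)) :=
      Submodule.finrank_add_le_finrank_add_finrank _ _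
    _ ≤ Module.finrank K (Submodule.span K (Set.range A.row)) + 1 := by
      rw [add_comm]
      gcongr
      simpa using finrank_span_le_card (R := K) {b}

section Multiplicity

variable {K n : Type*} [Field K] [Fintype n] [DecidableEq n]

theorem X_sub_C_pow_dvd_det (V : Matrix n n K[X]) (a : K) :
    (X - C a) ^ (Fintype.card n - (V.map (eval a)).rank) ∣ V.det := by
  obtain ⟨P, Q, e, hP, hQ, hPQ⟩ := exists_rank_normal_form (V.map (eval a))
  set W : Matrix n n K[X] := P.map C * V * Q.map C with hW
  have hWa : W.map (eval a) = (fromBlocks 1 0 0 0).submatrix e e := by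
    rw [hW, map_eval_mul, map_eval_mul, ← hPQ]
    simp [Function.comp_def]
  have hcol : ∀ i j, Sum.elim (fun _ ↦ 1) (fun _ ↦ X - C a) (e j) ∣ W i j := by
    intro i j
    cases hj : e j with
    | inl _ => exact one_dvd _
    | inr _ =>
      have hWij := congrFun₂ hWa i j
      rw [submatrix_apply, hj] at hWij
      refine dvd_iff_isRoot.2 (hWij.trans ?_)
      cases e i <;> rfl
  have hdvd := prod_dvd_det_of_forall_dvd hcol
  rw [e.prod_comp (Sum.elim (fun _ ↦ 1) fun _ ↦ X - C a), Fintype.prod_sum_type] at hdvd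
  have hunit {A : Matrix n n K} (hA : IsUnit A) : IsUnit (A.map C).det :=
    (isUnit_iff_isUnit_det _).1 (hA.map (C : K →+* K[X]).mapMatrix)
  rw [hW, det_mul, det_mul, (hunit hQ).dvd_mul_right, (hunit hP).dvd_mul_left] at hdvd
  simpa using hdvd

theorem card_le_rank_add_rootMultiplicity_det {V : Matrix n n K[X]} (hV : V.det ≠ 0) (a : K) :
    Fintype.card n ≤ (V.map (eval a)).rank + V.det.rootMultiplicity a :=
  Nat.sub_le_iff_le_add'.1 ((le_rootMultiplicity_iff hV).2 (X_sub_C_pow_dvd_det V a))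

theorem X_sub_C_pow_dvd_adjugate (V : Matrix n n K[X]) (a : K) (i j : n) :
    (X - C a) ^ (Fintype.card n - (V.map (eval a)).rank - 1) ∣ V.adjugate i j := by
  rw [adjugate_apply]
  refine (pow_dvd_pow _ ?_).trans (X_sub_C_pow_dvd_det _ a)
  rw [map_updateRow, Nat.sub_sub]
  exact Nat.sub_le_sub_left (rank_updateRow_le _ _ _) _

theorem rank_eval_add_rank_eval_eq_card {V U : Matrix n n K[X]} {a : K} {q : K[X]}
    (hVU : V * U = ((X - C a) * q) • 1) (hq : eval a q ≠ 0)
    (hV : (V.map (eval a)).rank + V.det.rootMultiplicity a = Fintype.card n) :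
    (V.map (eval a)).rank + (U.map (eval a)).rank = Fintype.card n := by
  have hq0 : q ≠ 0 := by
    rintro rfl
    exact hq eval_zero
  have hdet : V.det * U.det = q ^ Fintype.card n * (X - C a) ^ Fintype.card n := by
    rw [← det_mul, hVU, det_smul, det_one, mul_one, mul_pow, mul_comm]
  have hne : V.det * U.det ≠ 0 := by
    rw [hdet]
    exact mul_ne_zero (pow_ne_zero _ hq0) (pow_ne_zero _ (X_sub_C_ne_zero a))
  have hmult : V.det.rootMultiplicity a + U.det.rootMultiplicity a = Fintype.card n := by
    have hqn : ¬IsRoot (q ^ Fintype.card n) a := by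
      simp [IsRoot, hq]
    rw [← rootMultiplicity_mul hne, hdet, rootMultiplicity_mul_X_sub_C_pow (pow_ne_zero _ hq0),
      rootMultiplicity_eq_zero hqn, zero_add]
  have hU := card_le_rank_add_rootMultiplicity_det (right_ne_zero_of_mul hne) a
  have hle := rank_add_rank_le_card_of_mul_eq_zero (map_eval_mul_map_eval_eq_zero hVU)
  omega

theorem exists_adjugate_eq_X_sub_C_pow_smul {V : Matrix n n K[X]} {a : K} {p : ℕ} (hp : 1 ≤ p)
    (hmult : V.det.rootMultiplicity a = p) (hrank : (V.map (eval a)).rank + p = Fintype.card n) :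
    ∃ U : Matrix n n K[X], V.adjugate = (X - C a) ^ (p - 1) • U ∧
      V.map (eval a) * U.map (eval a) = 0 ∧ U.map (eval a) * V.map (eval a) = 0 ∧
      (U.map (eval a)).rank = p := by
  have hV : V.det ≠ 0 := by
    intro h
    rw [h, rootMultiplicity_zero] at hmult
    omega
  choose W hW using X_sub_C_pow_dvd_adjugate V a
  have hexp : Fintype.card n - (V.map (eval a)).rank - 1 = p - 1 := by omega
  have hadj : V.adjugate = (X - C a) ^ (p - 1) • Matrix.of W := by
    ext1 i j
    rw [hW, hexp]
    rfl
  obtain ⟨q, hq, hndvd⟩ := exists_eq_pow_rootMultiplicity_mul_and_not_dvd V.det hV a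
  have hdet : V.det = (X - C a) ^ (p - 1) * ((X - C a) * q) := by
    rw [hq, hmult, ← mul_assoc, ← pow_succ, Nat.sub_add_cancel hp]
  obtain ⟨hVU, hUV⟩ := mul_eq_smul_one_of_adjugate_eq_smul
    (.of_ne_zero (pow_ne_zero _ (X_sub_C_ne_zero a))) hadj hdet
  refine ⟨Matrix.of W, hadj, map_eval_mul_map_eval_eq_zero hVU,
    map_eval_mul_map_eval_eq_zero hUV, ?_⟩
  have hsum := rank_eval_add_rank_eval_eq_card hVU (mt dvd_iff_isRoot.2 hndvd) (hmult ▸ hrank)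
  omega

end Multiplicity

theorem statement16_general {K n : Type*} [Field K] [PartialOrder K] [StarRing K]
    [StarOrderedRing K] [Fintype n] [DecidableEq n] {V : Matrix n n K[X]} {a : K} {p : ℕ}
    (hp : 1 ≤ p) (hmult : V.det.rootMultiplicity a = p)
    (hdim : Module.finrank K (LinearMap.ker (V.map (eval a)).vecMulLinear) = p) :
    (∀ l : ℕ, l + 1 < p → iterDerivAt V.adjugate l a = 0) ∧
    iterDerivAt V.adjugate (p - 1) a ≠ 0 ∧ (iterDerivAt V.adjugate (p - 1) a).rank = p ∧
    (Set.range fun v : n → K ↦ v ᵥ* iterDerivAt V.adjugate (p - 1) a) =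
      LinearMap.ker (V.map (eval a)).vecMulLinear ∧
    Set.BijOn (fun v : n → K ↦ v ᵥ* iterDerivAt V.adjugate (p - 1) a)
      {v | V.map (eval a) *ᵥ star v = 0} (LinearMap.ker (V.map (eval a)).vecMulLinear) := by
  set A := V.map (eval a)
  have hrankA : A.rank + p = Fintype.card n := hdim ▸ rank_add_finrank_ker_vecMulLinear A
  obtain ⟨U, hU, hAU, hUA, hrankU⟩ := exists_adjugate_eq_X_sub_C_pow_smul hp hmult hrankA
  rw [hU]
  refine ⟨fun l hl ↦ iterDerivAt_X_sub_C_pow_smul_of_lt U a (Nat.lt_sub_of_add_lt hl), ?_⟩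
  rw [iterDerivAt_X_sub_C_pow_smul_self]
  have hfac : ((p - 1).factorial : K) ≠ 0 := Nat.cast_ne_zero.2 (Nat.factorial_ne_zero _)
  set M := ((p - 1).factorial : K) • U.map (eval a) with hM
  have hAM : A * M = 0 := by rw [hM, Matrix.mul_smul, hAU, smul_zero]
  have hMA : M * A = 0 := by rw [hM, Matrix.smul_mul, hUA, smul_zero]
  have hrankM : M.rank = p := by
    rw [hM, rank_smul_of_mem_nonZeroDivisors _ (mem_nonZeroDivisors_of_ne_zero hfac), hrankU]
  have hsum : A.rank + M.rank = Fintype.card n := by rw [hrankM, hrankA]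
  have hrange : LinearMap.range M.vecMulLinear = LinearMap.ker A.vecMulLinear :=
    range_vecMulLinear_eq_ker_of_mul_eq_zero hMA ((add_comm _ _).trans hsum)
  refine ⟨?_, hrankM, congrArg SetLike.coe hrange, ?_⟩
  · intro hzero
    rw [hzero, rank_zero] at hrankM
    omega
  · rw [← hrange]
    exact bijOn_vecMulLinear_of_mul_eq_zero hAM hsum

theorem statement16
    (N : ℕ) (hN : 0 < N)
    (V : Matrix (Fin N) (Fin N) (Polynomial ℂ)) (a : ℂ) (p : ℕ) (hp : 1 ≤ p)
    (hdet : V.det ≠ 0) (hmult : (V.det).rootMultiplicity a = p)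
    (hdimL : Module.finrank ℂ (Lsub (V.map (Polynomial.eval a))) = p)
    (hdimR : Module.finrank ℂ (Rsub (V.map (Polynomial.eval a))) = p) :
    -- (i)
    (∀ l : ℕ, l + 1 < p → adjDer V l a = 0) ∧
    -- (ii)
    adjDer V (p - 1) a ≠ 0 ∧ (adjDer V (p - 1) a).rank = p ∧
    -- (iii): v ↦ v · M maps ℂ^N onto L(a,V) and restricts to an isomorphism of
    -- R(a,V) onto L(a,V)
    (Set.range fun v : Fin N → ℂ => Matrix.vecMul v (adjDer V (p - 1) a))
      = (Lsub (V.map (Polynomial.eval a)) : Set (Fin N → ℂ)) ∧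
    Set.InjOn (fun v : Fin N → ℂ => Matrix.vecMul v (adjDer V (p - 1) a))
      (Rsub (V.map (Polynomial.eval a))) ∧
    (fun v : Fin N → ℂ => Matrix.vecMul v (adjDer V (p - 1) a)) ''
        (Rsub (V.map (Polynomial.eval a)))
      = (Lsub (V.map (Polynomial.eval a)) : Set (Fin N → ℂ)) := by
  open scoped ComplexOrder in
  obtain ⟨hzero, hne, hrank, hrange, hbij⟩ := statement16_general hp hmult hdimL
  exact ⟨hzero, hne, hrank, hrange, hbij.injOn, hbij.image_eq⟩
end
end

section
/- Let W : ℝ[x] → M_N(ℝ) be a linear map with moments S_k := W(x^k), and let {V_m} be N×N real matrix polynomials with deg V_m = m, nonsingular leading coefficients, which are left-orthogonal with respect to W, i.e. Σ_j V_{m,j}·S_{j+k} = Ω_m·δ_{k,m} for all 0 ≤ k ≤ m with Ω_m nonsingular (where V_m(x) = Σ_j V_{m,j}x^j). Fix m ≥ 1, let x_{m,1},…,x_{m,s} ∈ ℂ be the distinct zeros of det V_m with multiplicities l_1,…,l_s, and assume that for each k the left and right null spaces of V_m(x_{m,k}) both have dimension l_k. Define the associated polynomial of the first kind B^{(1)}_{m−1}(z)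 := Σ_{i=0}^{m−1} z^i·Σ_{j=i+1}^{m} V_{m,j}·S_{j−1−i}, and for each k set Γ_{m,k} := (l_k / (det V_m)^{(l_k)}(x_{m,k})) · (Adj V_m)^{(l_k−1)}(x_{m,k}) · B^{(1)}_{m−1}(x_{m,k}). Then for every N×N matrix polynomial V(x) = Σ_j V_j x^j of degree ≤ 2m−1 the quadrature formula holds: Σ_j V_j·S_j = Σ_{k=1}^s V(x_{m,k})·Γ_{m,k}. -/
open Polynomial Matrix Finset

noncomputable section

/-- Complexification of a matrix of real polynomials. -/
def cxMat {N : ℕ} (V : Matrix (Fin N) (Fin N) (Polynomial ℝ)) :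
    Matrix (Fin N) (Fin N) (Polynomial ℂ) :=
  V.map (Polynomial.map (algebraMap ℝ ℂ))

/-- Evaluation of a matrix of complex polynomials at a point. -/
def evalMat {N : ℕ} (V : Matrix (Fin N) (Fin N) (Polynomial ℂ)) (t : ℂ) :
    Matrix (Fin N) (Fin N) ℂ :=
  V.map (Polynomial.eval t)

/-- The matrix of `j`-th coefficients of a matrix of polynomials. -/
def coeffMat {N : ℕ} (V : Matrix (Fin N) (Fin N) (Polynomial ℝ)) (j : ℕ) : Mat N :=
  Matrix.of fun a b => (V a b).coeff j

/-- The associated polynomial of the first kind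
`B^{(1)}_{m-1}(z) = ∑_{i=0}^{m-1} z^i ∑_{j=i+1}^m V_{m,j} S_{j-1-i}`, evaluated at `z : ℂ`. -/
def assocB1 {N : ℕ} (W : Polynomial ℝ →ₗ[ℝ] Mat N)
    (Vm : Matrix (Fin N) (Fin N) (Polynomial ℝ)) (m : ℕ) (z : ℂ) :
    Matrix (Fin N) (Fin N) ℂ :=
  ∑ i ∈ Finset.range m, z ^ i •
    ((∑ j ∈ Finset.Icc (i + 1) m, coeffMat Vm j * W (X ^ (j - 1 - i))).map
      (fun r : ℝ => (r : ℂ)))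

/-!
If every zero `a` of `det P` has multiplicity equal to the dimension of the kernel of `P(a)`, then
`P⁻¹` has only simple poles, with residues `R_a` given by derivatives of `Adj P` and `det P`. For a
matrix polynomial `V` the difference `V P⁻¹ - ∑ V(a) R_a / (X - a)` is then a polynomial `Y`.
Multiplying by `P` and using `R_a P(a) = 0`, one gets
`V = Y P + ∑ V(a) R_a (P - P(a)) / (X - a)`.
When `deg V < 2m`, the degree of `Y` is less than `m`, so by orthogonality `Y P` integrates to `0`;
and the integral of `(P - P(a)) / (X - a)` is the associated polynomial of the first kind at `a`.
-/

section DivisibleEntries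

variable {R m n : Type*} [CommRing R]

lemma forall_dvd_apply_iff_exists_eq_smul {A : Matrix m n R} {d : R} :
    (∀ i j, d ∣ A i j) ↔ ∃ B : Matrix m n R, A = d • B := by
  constructor
  · intro h
    choose B hB using h
    exact ⟨of B, by ext i j; exact hB i j⟩
  · rintro ⟨B, rfl⟩ i j
    exact dvd_mul_right d (B i j)

variable [Fintype n] [DecidableEq n]

lemma exists_adjugate_eq_pow_smul_of_dvd_col {Q : Matrix n n R} {d : R} {s : Finset n}
    (h : ∀ k ∈ s, ∀ i, d ∣ Q i k) : ∃ B : Matrix n n R, Q.adjugate = d ^ (#s - 1) • B := by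
  set D : n → R := fun k => if k ∈ s then d else 1
  have hD : ∀ i k, D k ∣ Q i k := by
    intro i k
    by_cases hk : k ∈ s <;> simp [D, hk, h]
  choose M hM using hD
  have hQ : Q = of M * diagonal D := by
    ext i k
    rw [mul_diagonal, of_apply, hM, mul_comm]
  have hprod : ∀ k, d ^ (#s - 1) ∣ ∏ i ∈ univ.erase k, D i := by
    intro k
    have hcard : #s - 1 ≤ #{i ∈ univ.erase k | i ∈ s} := by
      rw [filter_erase, filter_univ_mem]
      exact pred_card_le_card_erase
    rw [prod_ite, prod_const, prod_const_one, mul_one]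
    exact pow_dvd_pow d hcard
  choose c hc using hprod
  refine ⟨diagonal c * (of M).adjugate, ?_⟩
  rw [hQ, adjugate_mul_distrib, adjugate_diagonal, ← Matrix.smul_mul, ← diagonal_smul]
  exact congrArg (diagonal · * _) (funext hc)

lemma mul_adjugate_cancel [IsDomain R] {P M N : Matrix n n R} (hP : P.det ≠ 0)
    (h : M * P.adjugate = N * P.adjugate) : M = N := by
  have h' := congrArg (· * P) h
  simp only [Matrix.mul_assoc, adjugate_mul, Matrix.mul_smul, Matrix.mul_one] at h'
  exact smul_right_injective _ hP h'

end DivisibleEntries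

section Kernel

variable {K n : Type*} [Field K] [Fintype n] [DecidableEq n]

lemma exists_isUnit_det_mul_col_eq_zero (A : Matrix n n K) :
    ∃ (T : Matrix n n K) (s : Finset n), IsUnit T.det ∧
      #s = Module.finrank K (LinearMap.ker A.mulVecLin) ∧ ∀ k ∈ s, ∀ i, (A * T) i k = 0 := by
  classical
  obtain ⟨L, R, D, h⟩ := Matrix.Pivot.exists_list_transvec_mul_mul_list_transvec_eq_diagonal A
  set U := (L.map TransvectionStruct.toMatrix).prod
  set T := (R.map TransvectionStruct.toMatrix).prod
  have hU : IsUnit U.det := by simp [U]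
  have hT : IsUnit T.det := by simp [T]
  refine ⟨T, univ.filter (D · = 0), hT, ?_, ?_⟩
  · have hrank : A.rank = #{i | D i ≠ 0} := by
      rw [← Fintype.card_subtype, ← rank_diagonal, ← h, rank_mul_eq_left_of_isUnit_det _ _ hT,
        rank_mul_eq_right_of_isUnit_det _ _ hU]
    have hnullity : A.rank + _ = _ := LinearMap.finrank_range_add_finrank_ker A.mulVecLin
    have hcard := card_filter_add_card_filter_not (s := univ) (fun i => D i = 0)
    rw [Module.finrank_fintype_fun_eq_card] at hnullity
    rw [card_univ] at hcard
    simp only [ne_eq] at hrank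
    omega
  · intro k hk i
    have hAT : A * T = U⁻¹ * diagonal D := by
      rw [← h, Matrix.mul_assoc, nonsing_inv_mul_cancel_left _ _ hU]
    have hDk : D k = 0 := (mem_filter.mp hk).2
    rw [hAT, mul_diagonal, hDk, mul_zero]

end Kernel

section EvalMatrix

variable {R n : Type*} [CommRing R]

lemma map_eval_mul_s18 [Fintype n] (P Q : Matrix n n R[X]) (a : R) :
    (P * Q).map (eval a) = P.map (eval a) * Q.map (eval a) :=
  Matrix.map_mul (f := evalRingHom a)

lemma map_eval_map_C (M : Matrix n n R) (a : R) : (M.map C).map (eval a) = M := by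
  ext; simp

lemma exists_eq_X_sub_C_smul_of_map_eval_eq_zero {P : Matrix n n R[X]} {a : R}
    (h : P.map (eval a) = 0) : ∃ E : Matrix n n R[X], P = (X - C a) • E :=
  forall_dvd_apply_iff_exists_eq_smul.mp fun i j =>
    dvd_iff_isRoot.mpr (congrFun (congrFun h i) j)

/-- The divided difference `(P(X) - P(a)) / (X - a)` of a matrix polynomial, computed entrywise
with division by the monic polynomial `X - a`. -/
def dividedDifference (P : Matrix n n R[X]) (a : R) : Matrix n n R[X] :=
  P.map (· /ₘ (X - C a))

lemma X_sub_C_smul_dividedDifference (P : Matrix n n R[X]) (a : R) :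
    (X - C a) • dividedDifference P a = P - (P.map (eval a)).map C := by
  ext1 i j
  simp [dividedDifference, X_sub_C_mul_divByMonic_eq_sub_modByMonic, modByMonic_X_sub_C_eq_C_eval]

lemma coeff_divByMonic_X_sub_C_of_natDegree_le {p : R[X]} {m : ℕ} (hp : p.natDegree ≤ m) (a : R)
    (i : ℕ) :
    (p /ₘ (X - C a)).coeff i = ∑ j ∈ Icc (i + 1) m, a ^ (j - (i + 1)) * p.coeff j := by
  rw [coeff_divByMonic_X_sub_C]
  refine sum_subset (Icc_subset_Icc_right hp) fun j hj hj' => ?_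
  rw [mem_Icc] at hj hj'
  rw [coeff_eq_zero_of_natDegree_lt (by omega), mul_zero]

end EvalMatrix

section Residue

variable {K n : Type*} [Field K] [Fintype n] [DecidableEq n]

lemma exists_adjugate_eq_X_sub_C_pow_smul_s18 (P : Matrix n n K[X]) (a : K) :
    ∃ B : Matrix n n K[X], P.adjugate =
      (X - C a) ^ (Module.finrank K (LinearMap.ker (P.map (eval a)).mulVecLin) - 1) • B := by
  obtain ⟨T, s, hT, hs, hPT⟩ := exists_isUnit_det_mul_col_eq_zero (P.map (eval a))
  have hcol : ∀ k ∈ s, ∀ i, X - C a ∣ (P * T.map C) i k := by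
    intro k hk i
    have heval : (P * T.map C).map (eval a) i k = 0 := by
      rw [map_eval_mul_s18, map_eval_map_C, hPT k hk i]
    exact dvd_iff_isRoot.mpr heval
  obtain ⟨B, hB⟩ := exists_adjugate_eq_pow_smul_of_dvd_col hcol
  have hdetT : (T.map C).det = C T.det := (RingHom.map_det C T).symm
  have hadj : C T.det • P.adjugate = T.map C * (P * T.map C).adjugate := by
    rw [adjugate_mul_distrib, ← Matrix.mul_assoc, mul_adjugate, hdetT, Matrix.smul_mul,
      Matrix.one_mul]
  refine ⟨C (T.det)⁻¹ • (T.map C * B), ?_⟩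
  calc P.adjugate = C (T.det)⁻¹ • C T.det • P.adjugate := by
        rw [smul_smul, ← C_mul, inv_mul_cancel₀ hT.ne_zero, C_1, one_smul]
    _ = _ := by rw [hadj, hB, hs, Matrix.mul_smul, smul_comm]

/-- The residue of `P⁻¹` at a zero `a` of `det P`, given in closed form by derivatives of `det P`
and `Adj P`. It is the residue only when the pole of `P⁻¹` at `a` is simple. -/
def invResidue (P : Matrix n n K[X]) (a : K) : Matrix n n K :=
  ((P.det.rootMultiplicity a : K) /
      eval a (derivative^[P.det.rootMultiplicity a] P.det)) •
    P.adjugate.map fun p => eval a (derivative^[P.det.rootMultiplicity a - 1] p)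

lemma eval_iterate_derivative_X_sub_C_pow_mul (l : ℕ) (a : K) (g : K[X]) :
    eval a (derivative^[l] ((X - C a) ^ l * g)) = l.factorial * eval a g := by
  have h := aeval_iterate_derivative_self ((X - C a) ^ l * g) l a (p' := g) (by simp)
  simpa only [coe_aeval_eq_eval, nsmul_eq_mul] using h

lemma eval_smul_invResidue [CharZero K] {P A : Matrix n n K[X]} {a : K} {g : K[X]}
    (hdet : P.det = (X - C a) ^ P.det.rootMultiplicity a * g) (hg : eval a g ≠ 0)
    (hadj : P.adjugate = (X - C a) ^ (P.det.rootMultiplicity a - 1) • A)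
    (ha : 0 < P.det.rootMultiplicity a) :
    eval a g • invResidue P a = A.map (eval a) := by
  unfold invResidue
  generalize P.det.rootMultiplicity a = l at *
  have hfactorial : (l.factorial : K) = l * (l - 1).factorial := by
    exact_mod_cast (Nat.mul_factorial_pred ha.ne').symm
  have hl : (l : K) ≠ 0 := Nat.cast_ne_zero.mpr ha.ne'
  have hl' : ((l - 1).factorial : K) ≠ 0 := Nat.cast_ne_zero.mpr (Nat.factorial_ne_zero _)
  ext i j
  simp only [hdet, hadj, Matrix.smul_apply, map_apply, smul_eq_mul,
    eval_iterate_derivative_X_sub_C_pow_mul, hfactorial]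
  field_simp

variable [CharZero K] {P : Matrix n n K[X]} {a : K}

/- When the multiplicity of `a` equals the dimension of the kernel, cancelling `(X - a) ^ (l - 1)`
from `Adj P / det P` leaves the simple pole `A / ((X - a) g)`. -/
lemma exists_reduced_adjugate (hP : P.det ≠ 0) (ha : P.det.IsRoot a)
    (hdim : Module.finrank K (LinearMap.ker (P.map (eval a)).mulVecLin) =
      P.det.rootMultiplicity a) :
    ∃ (A : Matrix n n K[X]) (g : K[X]), eval a g ≠ 0 ∧
      P.det /ₘ (X - C a) = (X - C a) ^ (P.det.rootMultiplicity a - 1) * g ∧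
      P.adjugate = (X - C a) ^ (P.det.rootMultiplicity a - 1) • A ∧
      A.map (eval a) = eval a g • invResidue P a := by
  obtain ⟨A, hA⟩ := exists_adjugate_eq_X_sub_C_pow_smul_s18 P a
  rw [hdim] at hA
  obtain ⟨g, hg, hga⟩ := exists_eq_pow_rootMultiplicity_mul_and_not_dvd P.det hP a
  rw [dvd_iff_isRoot, IsRoot.def] at hga
  have hl : 0 < P.det.rootMultiplicity a := (rootMultiplicity_pos hP).mpr ha
  have hquot : P.det /ₘ (X - C a) = (X - C a) ^ (P.det.rootMultiplicity a - 1) * g := by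
    conv_lhs => rw [hg, ← Nat.sub_add_cancel hl, pow_succ', mul_assoc,
      mul_divByMonic_cancel_left _ (monic_X_sub_C a)]
  exact ⟨A, g, hga, hquot, hA, (eval_smul_invResidue hg hga hA hl).symm⟩

lemma invResidue_mul_map_eval (hP : P.det ≠ 0) (ha : P.det.IsRoot a)
    (hdim : Module.finrank K (LinearMap.ker (P.map (eval a)).mulVecLin) =
      P.det.rootMultiplicity a) :
    invResidue P a * P.map (eval a) = 0 := by
  obtain ⟨A, g, hg, hquot, hadj, hA⟩ := exists_reduced_adjugate hP ha hdim
  have hAP : A * P = ((X - C a) * g) • (1 : Matrix n n K[X]) := by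
    refine smul_right_injective _
      (pow_ne_zero (P.det.rootMultiplicity a - 1) (X_sub_C_ne_zero a)) ?_
    calc (X - C a) ^ (P.det.rootMultiplicity a - 1) • (A * P)
        = ((X - C a) * (P.det /ₘ (X - C a))) • (1 : Matrix n n K[X]) := by
          rw [mul_divByMonic_eq_iff_isRoot.mpr ha, ← adjugate_mul, hadj, Matrix.smul_mul]
      _ = _ := by rw [hquot, mul_left_comm, mul_smul]
  have heval : (A * P).map (eval a) = 0 := by
    rw [hAP]
    ext
    simp
  rw [map_eval_mul_s18, hA, Matrix.smul_mul] at heval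
  exact (smul_eq_zero_iff_right hg).mp heval

lemma invResidue_mul_dividedDifference_mul_adjugate (hP : P.det ≠ 0) (ha : P.det.IsRoot a)
    (hdim : Module.finrank K (LinearMap.ker (P.map (eval a)).mulVecLin) =
      P.det.rootMultiplicity a) :
    (invResidue P a).map C * dividedDifference P a * P.adjugate =
      (P.det /ₘ (X - C a)) • (invResidue P a).map C := by
  refine smul_right_injective _ (X_sub_C_ne_zero a) ?_
  calc (X - C a) • ((invResidue P a).map C * dividedDifference P a * P.adjugate)
      = (invResidue P a).map C * P * P.adjugate := by
        rw [← Matrix.smul_mul, ← Matrix.mul_smul, X_sub_C_smul_dividedDifference, Matrix.mul_sub,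
          ← Matrix.map_mul, invResidue_mul_map_eval hP ha hdim, Matrix.map_zero _ C_0, sub_zero]
    _ = (X - C a) • (P.det /ₘ (X - C a)) • (invResidue P a).map C := by
        rw [Matrix.mul_assoc, mul_adjugate, Matrix.mul_smul, Matrix.mul_one, smul_smul,
          mul_divByMonic_eq_iff_isRoot.mpr ha]

/- In other words, `V P⁻¹ - V(a) Res_a(P⁻¹) / (X - a)` is regular at `a`. -/
lemma exists_mul_adjugate_eq_add_X_sub_C_pow_smul (hP : P.det ≠ 0) (ha : P.det.IsRoot a)
    (hdim : Module.finrank K (LinearMap.ker (P.map (eval a)).mulVecLin) = P.det.rootMultiplicity a)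
    (V : Matrix n n K[X]) :
    ∃ E : Matrix n n K[X], V * P.adjugate =
      (P.det /ₘ (X - C a)) • (V.map (eval a) * invResidue P a).map C +
        (X - C a) ^ P.det.rootMultiplicity a • E := by
  obtain ⟨A, g, -, hquot, hadj, hA⟩ := exists_reduced_adjugate hP ha hdim
  have heval : (V * A - g • (V.map (eval a) * invResidue P a).map C).map (eval a) = 0 := by
    have hsub : ∀ (Q : Matrix n n K[X]) (M : Matrix n n K),
        (Q - g • M.map C).map (eval a) = Q.map (eval a) - eval a g • M := fun Q M => by ext; simp
    rw [hsub, map_eval_mul_s18, hA, Matrix.mul_smul, sub_self]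
  obtain ⟨E, hE⟩ := exists_eq_X_sub_C_smul_of_map_eval_eq_zero heval
  have hl : 0 < P.det.rootMultiplicity a := (rootMultiplicity_pos hP).mpr ha
  refine ⟨E, ?_⟩
  rw [hadj, hquot, Matrix.mul_smul, ← mul_pow_sub_one hl.ne', mul_comm (X - C a), mul_smul,
    mul_smul, ← hE, ← smul_add, add_sub_cancel]

end Residue

section PartialFractions

variable {K : Type*} [Field K]

lemma X_sub_C_pow_rootMultiplicity_dvd_divByMonic {p : K[X]} {a b : K} (hab : a ≠ b)
    (hb : p.IsRoot b) :
    (X - C a) ^ p.rootMultiplicity a ∣ p /ₘ (X - C b) := by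
  have hcoprime : IsCoprime ((X - C a) ^ p.rootMultiplicity a) (X - C b) :=
    (pairwise_coprime_X_sub_C Function.injective_id hab).pow_left
  refine hcoprime.dvd_of_dvd_mul_left ?_
  rw [mul_divByMonic_eq_iff_isRoot.mpr hb]
  exact pow_rootMultiplicity_dvd p a

lemma dvd_of_forall_X_sub_C_pow_rootMultiplicity_dvd {p q : K[X]} (hsplits : p.Splits) (hp : p ≠ 0)
    (h : ∀ a, p.IsRoot a → (X - C a) ^ p.rootMultiplicity a ∣ q) : p ∣ q := by
  classical
  by_cases hq : q = 0
  · exact hq ▸ dvd_zero p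
  refine hsplits.dvd_of_roots_le_roots hp (Multiset.le_iff_count.mpr fun a => ?_)
  rw [count_roots, count_roots]
  by_cases ha : p.IsRoot a
  · exact (le_rootMultiplicity_iff hq).mpr (h a ha)
  · simp [rootMultiplicity_eq_zero ha]

variable {n : Type*} [Fintype n] [DecidableEq n] [CharZero K] [DecidableEq K]

lemma exists_mul_adjugate_eq_det_smul_add_sum {P : Matrix n n K[X]} (hP : P.det ≠ 0)
    (hsplits : P.det.Splits)
    (hdim : ∀ a, P.det.IsRoot a →
      Module.finrank K (LinearMap.ker (P.map (eval a)).mulVecLin) = P.det.rootMultiplicity a)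
    (V : Matrix n n K[X]) :
    ∃ Y : Matrix n n K[X], V * P.adjugate = P.det • Y +
      ∑ a ∈ P.det.roots.toFinset,
        (P.det /ₘ (X - C a)) • (V.map (eval a) * invResidue P a).map C := by
  set polarPart : K → Matrix n n K[X] := fun a =>
    (P.det /ₘ (X - C a)) • (V.map (eval a) * invResidue P a).map C
  have hmem : ∀ {a}, a ∈ P.det.roots.toFinset ↔ P.det.IsRoot a := by simp [hP]
  suffices ∀ i j, P.det ∣ (V * P.adjugate - ∑ a ∈ P.det.roots.toFinset, polarPart a) i j by
    obtain ⟨Y, hY⟩ := forall_dvd_apply_iff_exists_eq_smul.mp this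
    exact ⟨Y, sub_eq_iff_eq_add.mp hY⟩
  intro i j
  refine dvd_of_forall_X_sub_C_pow_rootMultiplicity_dvd hsplits hP fun a ha => ?_
  obtain ⟨E, hE⟩ := exists_mul_adjugate_eq_add_X_sub_C_pow_smul hP ha (hdim a ha) V
  have hother : ∀ b ∈ P.det.roots.toFinset.erase a,
      (X - C a) ^ P.det.rootMultiplicity a ∣ polarPart b i j := fun b hb =>
    (X_sub_C_pow_rootMultiplicity_dvd_divByMonic (ne_of_mem_erase hb).symm
      (hmem.mp (mem_of_mem_erase hb))).mul_right _
  rw [hE, ← add_sum_erase _ polarPart (hmem.mpr ha), add_sub_add_left_eq_sub, Matrix.sub_apply,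
    Matrix.sum_apply]
  exact dvd_sub (dvd_mul_right _ _) (dvd_sum hother)

theorem exists_eq_mul_add_sum_eval_mul_invResidue {P : Matrix n n K[X]} (hP : P.det ≠ 0)
    (hsplits : P.det.Splits)
    (hdim : ∀ a, P.det.IsRoot a →
      Module.finrank K (LinearMap.ker (P.map (eval a)).mulVecLin) = P.det.rootMultiplicity a)
    (V : Matrix n n K[X]) :
    ∃ Y : Matrix n n K[X], V = Y * P + ∑ a ∈ P.det.roots.toFinset,
      (V.map (eval a) * invResidue P a).map C * dividedDifference P a := by
  obtain ⟨Y, hY⟩ := exists_mul_adjugate_eq_det_smul_add_sum hP hsplits hdim V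
  refine ⟨Y, mul_adjugate_cancel hP ?_⟩
  rw [hY, Matrix.add_mul, Matrix.mul_assoc, mul_adjugate, Matrix.mul_smul, Matrix.mul_one,
    Matrix.sum_mul]
  refine congrArg _ (sum_congr rfl fun a ha => ?_)
  have hroot : P.det.IsRoot a := isRoot_of_mem_roots (Multiset.mem_toFinset.mp ha)
  have hpole := invResidue_mul_dividedDifference_mul_adjugate hP hroot (hdim a hroot)
  rw [Matrix.mul_assoc] at hpole
  rw [Matrix.map_mul, Matrix.mul_assoc, Matrix.mul_assoc, hpole, Matrix.mul_smul]

end PartialFractions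

section MomentIntegral

variable {R M : Type*} [Semiring R] [AddCommMonoid M] [Module R M]

/-- Formal integration of polynomials with coefficients in `R` against a measure with moments `S`:
the left linear map sending `∑ V_j X^j` to `∑ V_j • S_j`. -/
def momentIntegral (S : ℕ → M) : R[X] →ₗ[R] M :=
  lsum fun j => LinearMap.toSpanSingleton R M (S j)

lemma momentIntegral_eq_sum_range (S : ℕ → M) {p : R[X]} {d : ℕ} (hp : p.degree < d) :
    momentIntegral S p = ∑ j ∈ range d, p.coeff j • S j := by
  change p.sum (fun j c => c • S j) = _
  rw [Polynomial.sum_def]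
  refine sum_subset (fun j hj => ?_) fun j _ hj => ?_
  · exact mem_range.mpr (WithBot.coe_lt_coe.mp ((le_degree_of_mem_supp j hj).trans_lt hp))
  · rw [notMem_support_iff.mp hj, zero_smul]

lemma momentIntegral_mul_X_pow (S : ℕ → M) (p : R[X]) (k : ℕ) :
    momentIntegral S (p * X ^ k) = momentIntegral (fun j => S (j + k)) p := by
  induction p using Polynomial.induction_on' with
  | add p q hp hq => rw [add_mul, map_add, map_add, hp, hq]
  | monomial j c => simp [momentIntegral, lsum_apply, monomial_mul_X_pow, sum_monomial_index]

lemma momentIntegral_mul_eq_zero {S : ℕ → M} {p q : R[X]} {m : ℕ}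
    (horth : ∀ k < m, momentIntegral S (p * X ^ k) = 0) (hq : q.degree < m) :
    momentIntegral S (q * p) = 0 := by
  rw [q.as_sum_support_C_mul_X_pow, sum_mul, map_sum]
  refine sum_eq_zero fun k hk => ?_
  have hkm : k < m := WithBot.coe_lt_coe.mp ((le_degree_of_mem_supp k hk).trans_lt hq)
  rw [mul_assoc, X_pow_mul, ← smul_eq_C_mul, map_smul, horth k hkm, smul_zero]

lemma degree_lt_of_degree_mul_lt {p q : R[X]} {m k : ℕ} (hp : p.natDegree ≤ m)
    (hlead : IsUnit (p.coeff m)) (hqp : (q * p).degree < (k + m : ℕ)) : q.degree < k := by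
  rw [degree_lt_iff_coeff_zero] at hqp ⊢
  intro j hkj
  by_contra hj
  have hkq : k ≤ q.natDegree := hkj.trans (le_natDegree_of_ne_zero hj)
  have hcoeff := hqp (q.natDegree + m) (by omega)
  rw [coeff_mul_add_eq_of_natDegree_le le_rfl hp, hlead.mul_left_eq_zero, coeff_natDegree,
    leadingCoeff_eq_zero] at hcoeff
  exact hj (by rw [hcoeff, coeff_zero])

end MomentIntegral

section MatPolyEquiv

variable {R n : Type*} [CommRing R] [Fintype n] [DecidableEq n]

lemma degree_matPolyEquiv_lt_iff {P : Matrix n n R[X]} {d : ℕ} :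
    (matPolyEquiv P).degree < d ↔ ∀ i j, (P i j).degree < d := by
  simp only [degree_lt_iff_coeff_zero, ← Matrix.ext_iff, matPolyEquiv_coeff_apply,
    Matrix.zero_apply]
  exact ⟨fun h i j k hk => h k hk i j, fun h k hk i j => h i j k hk⟩

lemma natDegree_matPolyEquiv_le {P : Matrix n n R[X]} {m : ℕ}
    (hP : ∀ i j, (P i j).natDegree ≤ m) : (matPolyEquiv P).natDegree ≤ m := by
  refine natDegree_le_iff_coeff_eq_zero.mpr fun k hk => ?_
  ext i j
  rw [matPolyEquiv_coeff_apply, coeff_eq_zero_of_natDegree_lt ((hP i j).trans_lt hk),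
    Matrix.zero_apply]

lemma det_ne_zero_of_isUnit_coeff [IsDomain R] {P : Matrix n n R[X]} {m : ℕ}
    (hdeg : ∀ i j, (P i j).natDegree ≤ m) (hlead : IsUnit ((matPolyEquiv P).coeff m)) :
    P.det ≠ 0 := by
  intro hdet
  obtain ⟨v, hv, hvP⟩ := exists_vecMul_eq_zero_iff.mpr hdet
  have hrows : (of fun _ => v : Matrix n n R[X]) * P = 0 := by
    ext1 _ j
    exact congrFun hvP j
  have hdegree : (matPolyEquiv (of fun _ : n => v)).degree < (0 : ℕ) := by
    refine degree_lt_of_degree_mul_lt (natDegree_matPolyEquiv_le hdeg) hlead ?_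
    rw [← map_mul, hrows, map_zero, degree_zero]
    exact WithBot.bot_lt_coe _
  refine hv (funext fun i => degree_eq_bot.mp ?_)
  exact Nat.WithBot.lt_zero_iff.mp (degree_matPolyEquiv_lt_iff.mp hdegree i i)

lemma coeff_matPolyEquiv_dividedDifference {P : Matrix n n R[X]} {m : ℕ}
    (hP : ∀ i j, (P i j).natDegree ≤ m) (a : R) (i : ℕ) :
    (matPolyEquiv (dividedDifference P a)).coeff i =
      ∑ j ∈ Icc (i + 1) m, a ^ (j - (i + 1)) • (matPolyEquiv P).coeff j := by
  ext k l
  rw [matPolyEquiv_coeff_apply, dividedDifference, map_apply,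
    coeff_divByMonic_X_sub_C_of_natDegree_le (hP k l), Matrix.sum_apply]
  simp only [Matrix.smul_apply, matPolyEquiv_coeff_apply, smul_eq_mul]

lemma degree_matPolyEquiv_dividedDifference_lt {P : Matrix n n R[X]} {m : ℕ}
    (hP : ∀ i j, (P i j).natDegree ≤ m) (a : R) :
    (matPolyEquiv (dividedDifference P a)).degree < m := by
  refine (degree_lt_iff_coeff_zero _ _).mpr fun i hi => ?_
  rw [coeff_matPolyEquiv_dividedDifference hP, Icc_eq_empty (by omega), sum_empty]

/- Both sides are `∫ (P(t) - P(a)) / (t - a) dW(t)`, the left one sorted by powers of `t`, the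
right one by powers of `a`. -/
lemma momentIntegral_dividedDifference (S : ℕ → Matrix n n R) {P : Matrix n n R[X]} {m : ℕ}
    (hP : ∀ i j, (P i j).natDegree ≤ m) (a : R) :
    momentIntegral S (matPolyEquiv (dividedDifference P a)) =
      ∑ i ∈ range m, a ^ i •
        ∑ j ∈ Icc (i + 1) m, (matPolyEquiv P).coeff j * S (j - 1 - i) := by
  rw [momentIntegral_eq_sum_range S (degree_matPolyEquiv_dividedDifference_lt hP a)]
  simp only [coeff_matPolyEquiv_dividedDifference hP, smul_eq_mul, Finset.sum_mul, smul_sum,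
    sum_sigma', Matrix.smul_mul]
  refine sum_nbij' (fun x => ⟨x.2 - 1 - x.1, x.2⟩) (fun x => ⟨x.2 - 1 - x.1, x.2⟩) ?_ ?_ ?_ ?_ ?_
  all_goals
    rintro ⟨i, j⟩ hij
    simp only [mem_sigma, mem_range, mem_Icc] at hij ⊢
  · omega
  · omega
  · rw [show j - 1 - (j - 1 - i) = i by omega]
  · rw [show j - 1 - (j - 1 - i) = i by omega]
  · rw [show j - 1 - (j - 1 - i) = i by omega, show j - (i + 1) = j - 1 - i by omega]

end MatPolyEquiv

section Quadrature

theorem momentIntegral_eq_sum_eval_mul_invResidue_mul {K n : Type*} [Field K] [CharZero K]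
    [DecidableEq K] [Fintype n] [DecidableEq n] {S : ℕ → Matrix n n K} {P : Matrix n n K[X]} {m : ℕ}
    (hdeg : ∀ i j, (P i j).natDegree ≤ m) (hlead : IsUnit ((matPolyEquiv P).coeff m))
    (horth : ∀ k < m, momentIntegral S (matPolyEquiv P * X ^ k) = 0) (hsplits : P.det.Splits)
    (hdim : ∀ a, P.det.IsRoot a →
      Module.finrank K (LinearMap.ker (P.map (eval a)).mulVecLin) = P.det.rootMultiplicity a)
    {V : Matrix n n K[X]} (hV : ∀ i j, (V i j).degree < (m + m : ℕ)) :
    momentIntegral S (matPolyEquiv V) =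
      ∑ a ∈ P.det.roots.toFinset, V.map (eval a) * invResidue P a *
        momentIntegral S (matPolyEquiv (dividedDifference P a)) := by
  obtain ⟨Y, hY⟩ := exists_eq_mul_add_sum_eval_mul_invResidue
    (det_ne_zero_of_isUnit_coeff hdeg hlead) hsplits hdim V
  have hexpand : matPolyEquiv V = matPolyEquiv Y * matPolyEquiv P +
      ∑ a ∈ P.det.roots.toFinset, (V.map (eval a) * invResidue P a) •
        matPolyEquiv (dividedDifference P a) := by
    conv_lhs => rw [hY]
    simp only [map_add, map_mul, map_sum, matPolyEquiv_map_C, smul_eq_C_mul]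
  have hmul : matPolyEquiv Y * matPolyEquiv P ∈ degreeLT (Matrix n n K) (m + m) := by
    rw [← sub_eq_iff_eq_add.mpr hexpand]
    refine Submodule.sub_mem _ (mem_degreeLT.mpr (degree_matPolyEquiv_lt_iff.mpr hV)) <|
      Submodule.sum_mem _ fun a _ => Submodule.smul_mem _ _ <|
      degreeLT_mono (Nat.le_add_left m m) (mem_degreeLT.mpr ?_)
    exact degree_matPolyEquiv_dividedDifference_lt hdeg a
  have hYdeg : (matPolyEquiv Y).degree < m :=
    degree_lt_of_degree_mul_lt (natDegree_matPolyEquiv_le hdeg) hlead (mem_degreeLT.mp hmul)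
  rw [hexpand, map_add, momentIntegral_mul_eq_zero horth hYdeg, zero_add, map_sum]
  simp only [map_smul, smul_eq_mul]

variable {F K n : Type*} [Field F] [Field K] [Algebra F K] [Fintype n]

/-- The value at `z` of the associated polynomial of the first kind of `P`, where `P` and the
moments `S` have entries in `F` and `z` lies in the extension `K`. The formal degree `m` of `P` is
an argument. -/
def assocFirstKind (S : ℕ → Matrix n n F) (P : Matrix n n F[X]) (m : ℕ) (z : K) : Matrix n n K :=
  ∑ i ∈ range m, z ^ i •
    (∑ j ∈ Icc (i + 1) m, P.map (coeff · j) * S (j - 1 - i)).map (algebraMap F K)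

lemma map_algebraMap_sum_mul (A B : ℕ → Matrix n n F) (s : Finset ℕ) :
    (∑ j ∈ s, A j * B j).map (algebraMap F K) =
      ∑ j ∈ s, (A j).map (algebraMap F K) * (B j).map (algebraMap F K) := by
  classical
  simp only [← RingHom.mapMatrix_apply, map_sum, map_mul]

variable [DecidableEq n]

lemma coeff_matPolyEquiv_map (P : Matrix n n F[X]) (j : ℕ) :
    (matPolyEquiv (P.map (Polynomial.map (algebraMap F K)))).coeff j =
      (P.map (coeff · j)).map (algebraMap F K) := by
  ext
  simp [matPolyEquiv_coeff_apply]

lemma momentIntegral_map (S : ℕ → Matrix n n F) {V : Matrix n n F[X]} {d : ℕ}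
    (hV : ∀ i j, (V i j).degree < d) :
    momentIntegral (fun j => (S j).map (algebraMap F K))
        (matPolyEquiv (V.map (Polynomial.map (algebraMap F K)))) =
      (∑ j ∈ range d, V.map (coeff · j) * S j).map (algebraMap F K) := by
  rw [momentIntegral_eq_sum_range (d := d), map_algebraMap_sum_mul]
  · simp only [coeff_matPolyEquiv_map, smul_eq_mul]
  · exact degree_matPolyEquiv_lt_iff.mpr fun i j => degree_map_le.trans_lt (hV i j)

lemma momentIntegral_dividedDifference_map (S : ℕ → Matrix n n F) {P : Matrix n n F[X]} {m : ℕ}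
    (hP : ∀ i j, (P i j).natDegree ≤ m) (z : K) :
    momentIntegral (fun j => (S j).map (algebraMap F K))
        (matPolyEquiv (dividedDifference (P.map (Polynomial.map (algebraMap F K))) z)) =
      assocFirstKind S P m z := by
  rw [momentIntegral_dividedDifference (m := m)]
  · simp only [assocFirstKind, map_algebraMap_sum_mul, coeff_matPolyEquiv_map]
  · exact fun i j => natDegree_map_le.trans (hP i j)

theorem statement18_general [CharZero K] [DecidableEq K] (S : ℕ → Matrix n n F)
    (P : Matrix n n F[X]) (m : ℕ) (hdeg : ∀ i j, (P i j).natDegree ≤ m)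
    (hlead : IsUnit (P.map (coeff · m)).det)
    (horth : ∀ k < m, ∑ j ∈ range (m + 1), P.map (coeff · j) * S (j + k) = 0)
    (hsplits : (P.map (Polynomial.map (algebraMap F K))).det.Splits)
    (hdim : ∀ a, (P.map (Polynomial.map (algebraMap F K))).det.IsRoot a →
      Module.finrank K (LinearMap.ker
        ((P.map (Polynomial.map (algebraMap F K))).map (eval a)).mulVecLin) =
          (P.map (Polynomial.map (algebraMap F K))).det.rootMultiplicity a)
    (V : Matrix n n F[X]) (hV : ∀ i j, (V i j).degree < (2 * m : ℕ)) :
    (∑ j ∈ range (2 * m), V.map (coeff · j) * S j).map (algebraMap F K) =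
      ∑ a ∈ (P.map (Polynomial.map (algebraMap F K))).det.roots.toFinset,
        (V.map (Polynomial.map (algebraMap F K))).map (eval a) *
          (invResidue (P.map (Polynomial.map (algebraMap F K))) a * assocFirstKind S P m a) := by
  have hdegK : ∀ i j, (P.map (Polynomial.map (algebraMap F K)) i j).natDegree ≤ m := fun i j =>
    natDegree_map_le.trans (hdeg i j)
  have hleadK : IsUnit ((matPolyEquiv (P.map (Polynomial.map (algebraMap F K)))).coeff m) := by
    rw [coeff_matPolyEquiv_map]
    exact ((isUnit_iff_isUnit_det _).mpr hlead).map (algebraMap F K).mapMatrix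
  have horthK : ∀ k < m, momentIntegral (fun j => (S j).map (algebraMap F K))
      (matPolyEquiv (P.map (Polynomial.map (algebraMap F K))) * X ^ k) = 0 := by
    intro k hk
    have hdeg' : ∀ i j, (P i j).degree < (m + 1 : ℕ) := fun i j =>
      (degree_le_of_natDegree_le (hdeg i j)).trans_lt (by exact_mod_cast m.lt_succ_self)
    rw [momentIntegral_mul_X_pow, momentIntegral_map (fun j => S (j + k)) hdeg', horth k hk,
      Matrix.map_zero _ (map_zero _)]
  have hVK : ∀ i j, (V.map (Polynomial.map (algebraMap F K)) i j).degree < (m + m : ℕ) :=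
    fun i j => degree_map_le.trans_lt (two_mul m ▸ hV i j)
  rw [← momentIntegral_map S hV,
    momentIntegral_eq_sum_eval_mul_invResidue_mul hdegK hleadK horthK hsplits hdim hVK]
  simp only [momentIntegral_dividedDifference_map S hdeg, Matrix.mul_assoc]

end Quadrature

lemma sum_roots_toFinset_eq_sum {K M ι : Type*} [CommRing K] [IsDomain K] [Infinite K]
    [DecidableEq K] [AddCommMonoid M] [Fintype ι] {p : K[X]} {x : ι → K}
    (hinj : Function.Injective x) (hx : ∀ z, p.eval z = 0 ↔ ∃ k, z = x k) (f : K → M) :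
    ∑ a ∈ p.roots.toFinset, f a = ∑ k, f (x k) := by
  have hp : p ≠ 0 := by
    rintro rfl
    obtain ⟨z, hz⟩ := (Set.finite_range x).exists_notMem
    obtain ⟨k, rfl⟩ := (hx z).mp eval_zero
    exact hz (Set.mem_range_self k)
  have hroots : p.roots.toFinset = univ.map ⟨x, hinj⟩ := by
    ext z
    simp [hp, hx, eq_comm]
  rw [hroots, sum_map]
  rfl

theorem statement18
    (N : ℕ) (hN : 0 < N)
    (W : Polynomial ℝ →ₗ[ℝ] Mat N)
    (Vs : ℕ → Matrix (Fin N) (Fin N) (Polynomial ℝ))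
    (hdeg : ∀ n i j, ((Vs n) i j).natDegree ≤ n)
    (hlead : ∀ n, IsUnit (coeffMat (Vs n) n).det)
    -- left-orthogonality of {V_n} with respect to W
    (Ω : ℕ → Mat N) (hΩ : ∀ n, IsUnit (Ω n).det)
    (horth : ∀ n k, k ≤ n →
      (∑ j ∈ Finset.range (n + 1), coeffMat (Vs n) j * W (X ^ (j + k)))
        = if k = n then Ω n else 0)
    (m : ℕ) (hm : 1 ≤ m)
    -- the distinct zeros of det V_m, with multiplicities l k
    (s : ℕ) (x : Fin s → ℂ) (hinj : Function.Injective x) (l : Fin s → ℕ)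
    (hzeros : ∀ z : ℂ, ((cxMat (Vs m)).det).eval z = 0 ↔ ∃ k, z = x k)
    (hmult : ∀ k, ((cxMat (Vs m)).det).rootMultiplicity (x k) = l k)
    (hdimL : ∀ k, Module.finrank ℂ
      (LinearMap.ker (evalMat (cxMat (Vs m)) (x k)).vecMulLinear) = l k)
    (hdimR : ∀ k, Module.finrank ℂ
      (LinearMap.ker (evalMat (cxMat (Vs m)) (x k)).mulVecLin) = l k) :
    -- quadrature formula: ∫ V(x) dW(x) = ∑_k V(x_{m,k}) Γ_{m,k}
    ∀ V : Matrix (Fin N) (Fin N) (Polynomial ℝ), (∀ i j, (V i j).natDegree ≤ 2 * m - 1) →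
      ((∑ j ∈ Finset.range (2 * m), coeffMat V j * W (X ^ j)).map (fun r : ℝ => (r : ℂ)))
        = ∑ k : Fin s, evalMat (cxMat V) (x k) *
            (((l k : ℂ) / Polynomial.eval (x k) (iterDeriv (l k) (cxMat (Vs m)).det)) •
              (adjDer (cxMat (Vs m)) (l k - 1) (x k) * assocB1 W (Vs m) m (x k))) := by
  obtain rfl : (fun k => (cxMat (Vs m)).det.rootMultiplicity (x k)) = l := funext hmult
  intro V hV
  have hdim : ∀ z, (cxMat (Vs m)).det.IsRoot z → Module.finrank ℂ
      (LinearMap.ker (evalMat (cxMat (Vs m)) z).mulVecLin) =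
        (cxMat (Vs m)).det.rootMultiplicity z := fun z hz => by
    obtain ⟨k, rfl⟩ := (hzeros z).mp hz
    exact hdimR k
  have horth' : ∀ k < m, ∑ j ∈ range (m + 1), coeffMat (Vs m) j * W (X ^ (j + k)) = 0 :=
    fun k hk => (horth m k hk.le).trans (if_neg hk.ne)
  have hV' : ∀ i j, (V i j).degree < (2 * m : ℕ) := fun i j =>
    (degree_le_of_natDegree_le (hV i j)).trans_lt (by exact_mod_cast (by omega : 2 * m - 1 < 2 * m))
  simp only [← Matrix.smul_mul]
  exact (statement18_general (fun j => W (X ^ j)) (Vs m) m (hdeg m) (hlead m) horth'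
    (IsAlgClosed.splits _) hdim V hV').trans (sum_roots_toFinset_eq_sum hinj hzeros _)
end
end
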